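/- Let ε ∈ (0, 1), β ≥ 0, let S be a finite index set with |S| = d_c − 1 for some integer d_c ≥ 2, let (B_j)_{j∈S} be real numbers with |B_j| ≤ 1 − ε for all j ∈ S, let k ∈ S with B_k ≠ 0, and set u = β·∏_{j∈S} B_j. Assume β·(1 − ε)^{d_c − 1} < 1. Then the one-hop gain satisfies (1/2) · ( 2|u| / ((1 − u²)·|B_k|) ) ≤ β·(1 − ε)^{d_c − 2} / (1 − β²·(1 − ε)^{2(d_c − 1)}). -/

import Mathlib

/-- The paper's per-entry Jacobian bound for one full BP iteration: the one-hop gain,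
i.e. the code-node attenuation factor `1/2` times the magnitude
`2|u| / ((1 − u²)|B_k|)` of the generator-update derivative, is bounded by
`β (1−ε)^{d_c−2} / (1 − β² (1−ε)^{2(d_c−1)})`. -/
theorem one_hop_gain_bound
    {ι : Type*} (ε β : ℝ) (hε0 : 0 < ε) (hε1 : ε < 1) (hβ : 0 ≤ β)
    (dc : ℕ) (hdc : 2 ≤ dc)
    (S : Finset ι) (hcard : S.card = dc - 1)
    (B : ι → ℝ) (hB : ∀ j ∈ S, |B j| ≤ 1 - ε)
    (k : ι) (hk : k ∈ S) (hBk : B k ≠ 0)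
    (u : ℝ) (hu : u = β * ∏ j ∈ S, B j)
    (hsmall : β * (1 - ε) ^ (dc - 1) < 1) :
    (1 / 2) * (2 * |u| / ((1 - u ^ 2) * |B k|)) ≤
      β * (1 - ε) ^ (dc - 2) / (1 - β ^ 2 * (1 - ε) ^ (2 * (dc - 1))) := by
  classical
  have hr : 0 ≤ 1 - ε := by linarith
  have hkpos : 0 < |B k| := abs_pos.mpr hBk
  set P : ℝ := ∏ j ∈ S.erase k, |B j| with hP
  have hP0 : 0 ≤ P := Finset.prod_nonneg (fun j _ => abs_nonneg _)
  have hPle : P ≤ (1 - ε) ^ (dc - 2) := by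
    have h1 : P ≤ ∏ _j ∈ S.erase k, (1 - ε) :=
      Finset.prod_le_prod (fun j _ => abs_nonneg _)
        (fun j hj => hB j (Finset.mem_of_mem_erase hj))
    rw [Finset.prod_const, Finset.card_erase_of_mem hk, hcard] at h1
    have h2 : dc - 1 - 1 = dc - 2 := by omega
    rwa [h2] at h1
  have habs : |u| = β * P * |B k| := by
    rw [hu, abs_mul, abs_of_nonneg hβ, Finset.abs_prod, ← Finset.prod_erase_mul _ _ hk, mul_assoc]
  have hpow : (1 - ε) ^ (dc - 1) = (1 - ε) ^ (dc - 2) * (1 - ε) := by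
    rw [← pow_succ]; congr 1; omega
  have hule : |u| ≤ β * (1 - ε) ^ (dc - 1) := by
    rw [habs, hpow, ← mul_assoc]
    have := hB k hk
    gcongr
  have hsq : u ^ 2 ≤ (β * (1 - ε) ^ (dc - 1)) ^ 2 := by
    rw [← sq_abs u]
    gcongr
  have hM0 : 0 ≤ β * (1 - ε) ^ (dc - 1) := by positivity
  have hlt : (β * (1 - ε) ^ (dc - 1)) ^ 2 < 1 := by nlinarith
  have hden : β ^ 2 * (1 - ε) ^ (2 * (dc - 1)) = (β * (1 - ε) ^ (dc - 1)) ^ 2 := by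
    rw [mul_pow, ← pow_mul, mul_comm 2]
  have hu1 : 0 < 1 - u ^ 2 := by linarith
  have hL : (1 / 2) * (2 * |u| / ((1 - u ^ 2) * |B k|)) = β * P / (1 - u ^ 2) := by
    rw [habs]
    have := hu1.ne'
    have := hkpos.ne'
    field_simp
  rw [hL, hden]
  apply div_le_div₀
  · positivity
  · gcongr
  · linarith
  · linarith
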